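/- arXiv:1704.05321 — 9 statements merged into one kernel-verified Lean document; each statement's English description precedes it below -/
import Mathlib

section
/- For every n×n pairwise comparison matrix A (n ≥ 2), the weight vector w defined by w_i = (∏_{j=1}^n a_{i,j})^{1/n} / Σ_{k=1}^n (∏_{j=1}^n a_{k,j})^{1/n} is the unique minimizer, among all weight vectors, of the objective Σ_{i=1}^n Σ_{j=1}^n ( log a_{i,j} − log(w_i/w_j) )². -/
open Finset

/-- A pairwise comparison matrix: all entries positive, reciprocal. -/
def IsPCM {n : ℕ} (A : Matrix (Fin n) (Fin n) ℝ) : Prop :=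
  (∀ i j, 0 < A i j) ∧ (∀ i j, A j i = 1 / A i j)

/-- Consistency of a pairwise comparison matrix. -/
def IsConsistent {n : ℕ} (A : Matrix (Fin n) (Fin n) ℝ) : Prop :=
  ∀ i j k, A i k = A i j * A j k

/-- The LLSM (row geometric mean) weight vector. -/
noncomputable def llsm {n : ℕ} (A : Matrix (Fin n) (Fin n) ℝ) : Fin n → ℝ :=
  fun i => (∏ j, A i j) ^ ((1 : ℝ) / n) / ∑ k, (∏ j, A k j) ^ ((1 : ℝ) / n)

/-- `Ahat` is obtained from `A` by an α-transformation on the triad `(i,j,k)`. -/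
def TriadTransform {n : ℕ} (A Ahat : Matrix (Fin n) (Fin n) ℝ)
    (i j k : Fin n) (α : ℝ) : Prop :=
  i ≠ j ∧ j ≠ k ∧ i ≠ k ∧ 0 < α ∧
  Ahat i j = α * A i j ∧ Ahat j i = A j i / α ∧
  Ahat j k = α * A j k ∧ Ahat k j = A k j / α ∧
  Ahat k i = α * A k i ∧ Ahat i k = A i k / α ∧
  ∀ l m : Fin n,
    (l, m) ≠ (i, j) → (l, m) ≠ (j, i) → (l, m) ≠ (j, k) → (l, m) ≠ (k, j) →
    (l, m) ≠ (k, i) → (l, m) ≠ (i, k) → Ahat l m = A l m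

theorem llsm_aux_sum {n : ℕ} (e : Fin n → Fin n → ℝ) (d : Fin n → ℝ)
    (hanti : ∀ i j, e j i = - e i j) (hrow : ∀ i, ∑ j, e i j = 0) :
    ∑ i, ∑ j, (e i j - (d i - d j)) ^ 2 =
      ∑ i, ∑ j, (e i j) ^ 2 + ∑ i, ∑ j, (d i - d j) ^ 2 := by
  have h1 : ∑ i, ∑ j, e i j * d i = 0 := by
    apply Finset.sum_eq_zero
    intro i _
    rw [← Finset.sum_mul, hrow, zero_mul]
  have h2 : ∑ i, ∑ j, e i j * d j = 0 := by
    rw [Finset.sum_comm]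
    apply Finset.sum_eq_zero
    intro j _
    rw [← Finset.sum_mul]
    have : ∑ i, e i j = 0 := by
      rw [Finset.sum_congr rfl (fun i _ => hanti j i), Finset.sum_neg_distrib, hrow, neg_zero]
    rw [this, zero_mul]
  have h3 : ∑ i, ∑ j, (e i j - (d i - d j)) ^ 2 =
      ∑ i, ∑ j, (e i j) ^ 2 + ∑ i, ∑ j, (d i - d j) ^ 2
        - 2 * ∑ i, ∑ j, e i j * d i + 2 * ∑ i, ∑ j, e i j * d j := by
    simp only [Finset.mul_sum, ← Finset.sum_add_distrib, ← Finset.sum_sub_distrib]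
    refine Finset.sum_congr rfl fun i _ => Finset.sum_congr rfl fun j _ => ?_
    ring
  rw [h3, h1, h2]; ring

theorem llsm_unique_minimizer {n : ℕ} (hn : 2 ≤ n)
    (A : Matrix (Fin n) (Fin n) ℝ) (hA : IsPCM A) :
    (∀ i, 0 < llsm A i) ∧ (∑ i, llsm A i = 1) ∧
    (∀ w : Fin n → ℝ, (∀ i, 0 < w i) → (∑ i, w i = 1) → w ≠ llsm A →
      ∑ i, ∑ j, (Real.log (A i j) - Real.log (llsm A i / llsm A j)) ^ 2 <
        ∑ i, ∑ j, (Real.log (A i j) - Real.log (w i / w j)) ^ 2) := by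
  obtain ⟨hpos, hrec⟩ := hA
  have hn0 : (n : ℝ) ≠ 0 := by
    have : n ≠ 0 := by omega
    exact_mod_cast this
  have : Nonempty (Fin n) := ⟨⟨0, by omega⟩⟩
  have hP : ∀ i, 0 < ∏ j, A i j := fun i => Finset.prod_pos fun j _ => hpos i j
  have hg : ∀ i, 0 < (∏ j, A i j) ^ ((1 : ℝ) / n) := fun i => Real.rpow_pos_of_pos (hP i) _
  have hS : 0 < ∑ k, (∏ j, A k j) ^ ((1 : ℝ) / n) :=
    Finset.sum_pos (fun i _ => hg i) Finset.univ_nonempty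
  have hl : ∀ i, 0 < llsm A i := fun i => div_pos (hg i) hS
  have hl1 : ∑ i, llsm A i = 1 := by
    unfold llsm
    rw [← Finset.sum_div, div_self hS.ne']
  refine ⟨hl, hl1, ?_⟩
  intro w hw hw1 hne
  have hlog : ∀ i, Real.log (llsm A i) = (1 / (n : ℝ)) * ∑ j, Real.log (A i j)
      - Real.log (∑ k, (∏ j, A k j) ^ ((1 : ℝ) / n)) := by
    intro i
    unfold llsm
    rw [Real.log_div (hg i).ne' hS.ne', Real.log_rpow (hP i),
      Real.log_prod (fun j _ => (hpos i j).ne')]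
  have hb : ∀ i j, Real.log (A j i) = - Real.log (A i j) := by
    intro i j
    rw [hrec i j, one_div, Real.log_inv]
  have hbsum : ∑ i, ∑ j, Real.log (A i j) = 0 := by
    have h : ∑ i, ∑ j, Real.log (A i j) = - ∑ i, ∑ j, Real.log (A i j) := by
      conv_lhs => rw [Finset.sum_comm]
      simp only [← Finset.sum_neg_distrib]
      exact Finset.sum_congr rfl fun i _ => Finset.sum_congr rfl fun j _ => hb i j
    linarith
  have key := llsm_aux_sum
    (fun i j => Real.log (A i j) - Real.log (llsm A i / llsm A j))
    (fun i => Real.log (w i) - Real.log (llsm A i))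
    (by
      intro i j
      rw [hb i j, Real.log_div (hl i).ne' (hl j).ne', Real.log_div (hl j).ne' (hl i).ne']
      ring)
    (by
      intro i
      simp only [fun i j => Real.log_div (hl i).ne' (hl j).ne', hlog]
      simp only [Finset.sum_sub_distrib, ← Finset.mul_sum, hbsum, Finset.sum_const,
        Finset.card_univ, Fintype.card_fin, nsmul_eq_mul]
      field_simp
      ring)
  have hE : ∑ i, ∑ j, (Real.log (A i j) - Real.log (w i / w j)) ^ 2 =
      ∑ i, ∑ j, ((Real.log (A i j) - Real.log (llsm A i / llsm A j)) -
        ((Real.log (w i) - Real.log (llsm A i)) - (Real.log (w j) - Real.log (llsm A j)))) ^ 2 := by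
    refine Finset.sum_congr rfl fun i _ => Finset.sum_congr rfl fun j _ => ?_
    rw [Real.log_div (hl i).ne' (hl j).ne', Real.log_div (hw i).ne' (hw j).ne']
    ring
  rw [hE]
  rw [key]
  apply lt_add_of_pos_right
  by_contra hnp
  apply hne
  have hz : ∑ i, ∑ j, ((Real.log (w i) - Real.log (llsm A i)) -
      (Real.log (w j) - Real.log (llsm A j))) ^ 2 = 0 :=
    le_antisymm (not_lt.mp hnp)
      (Finset.sum_nonneg fun i _ => Finset.sum_nonneg fun j _ => sq_nonneg _)
  have hd : ∀ i j, Real.log (w i) - Real.log (llsm A i) =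
      Real.log (w j) - Real.log (llsm A j) := by
    intro i j
    have h1 := (Finset.sum_eq_zero_iff_of_nonneg
      (fun i _ => Finset.sum_nonneg fun j _ => sq_nonneg _)).mp hz i (Finset.mem_univ i)
    have h2 := (Finset.sum_eq_zero_iff_of_nonneg
      (fun j _ => sq_nonneg _)).mp h1 j (Finset.mem_univ j)
    exact sub_eq_zero.mp (pow_eq_zero_iff two_ne_zero |>.mp h2)
  have hcross : ∀ i j, w i * llsm A j = w j * llsm A i := by
    intro i j
    apply Real.log_injOn_pos (mul_pos (hw i) (hl j)) (mul_pos (hw j) (hl i))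
    rw [Real.log_mul (hw i).ne' (hl j).ne', Real.log_mul (hw j).ne' (hl i).ne']
    linarith [hd i j]
  funext i
  calc w i = ∑ j, w i * llsm A j := by rw [← Finset.mul_sum, hl1, mul_one]
    _ = ∑ j, w j * llsm A i := Finset.sum_congr rfl fun j _ => hcross i j
    _ = llsm A i := by rw [← Finset.sum_mul, hw1, one_mul]
end

section
/- The Logarithmic Least Squares Method satisfies correctness: for every consistent n×n pairwise comparison matrix A, the LLSM weight vector w satisfies w_i / w_j = a_{i,j} for all 1 ≤ i, j ≤ n. -/
open Finset

theorem llsm_correctness {n : ℕ} (A : Matrix (Fin n) (Fin n) ℝ)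
    (hA : IsPCM A) (hcons : IsConsistent A) :
    ∀ i j, llsm A i / llsm A j = A i j := by
  intro i j
  have hn : (n : ℝ) ≠ 0 := by
    have := i.pos
    positivity
  have hP : ∀ k, 0 < ∏ l, A k l := fun k => Finset.prod_pos fun l _ => hA.1 k l
  have hQ : ∀ k, 0 < (∏ l, A k l) ^ ((1 : ℝ) / n) := fun k => Real.rpow_pos_of_pos (hP k) _
  have hS : 0 < ∑ k, (∏ l, A k l) ^ ((1 : ℝ) / n) :=
    Finset.sum_pos (fun k _ => hQ k) ⟨i, Finset.mem_univ i⟩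
  have h1 : ∏ l, A i l = A i j ^ n * ∏ l, A j l := by
    rw [Finset.prod_congr rfl (fun l _ => hcons i j l), Finset.prod_mul_distrib]
    simp
  have h2 : (∏ l, A i l) ^ ((1 : ℝ) / n) = A i j * (∏ l, A j l) ^ ((1 : ℝ) / n) := by
    rw [h1, Real.mul_rpow (pow_nonneg (hA.1 i j).le n) (hP j).le, ← Real.rpow_natCast,
      ← Real.rpow_mul (hA.1 i j).le, mul_one_div_cancel hn, Real.rpow_one]
  unfold llsm
  rw [div_div_div_cancel_right₀ hS.ne', h2, mul_div_cancel_right₀ _ (hQ j).ne']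
end

section
/- Let A be a consistent n×n pairwise comparison matrix (n ≥ 1) and let w ∈ ℝ^n be a vector with all entries positive such that A·w = λ·w for some real number λ. Then λ = n and w_i / w_j = a_{i,j} for all 1 ≤ i, j ≤ n. (This expresses correctness of the Eigenvector Method in the consistent case.) -/
open Finset

theorem em_correctness {n : ℕ} (hn : 1 ≤ n) (A : Matrix (Fin n) (Fin n) ℝ)
    (hA : IsPCM A) (hcons : IsConsistent A)
    (w : Fin n → ℝ) (hw : ∀ i, 0 < w i) (lam : ℝ)
    (heig : A.mulVec w = lam • w) :
    lam = n ∧ ∀ i j, w i / w j = A i j := by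
  have hS : ∀ i, ∑ j, A i j * w j = lam * w i := by
    intro i
    have h := congrFun heig i
    simpa [Matrix.mulVec, dotProduct] using h
  have hprop : ∀ i j, lam * w i = A i j * (lam * w j) := by
    intro i j
    rw [← hS i, ← hS j, Finset.mul_sum]
    refine Finset.sum_congr rfl fun k _ => ?_
    rw [hcons i j k, mul_assoc]
  let i0 : Fin n := ⟨0, hn⟩
  have hpos : 0 < lam * w i0 := by
    rw [← hS i0]
    exact Finset.sum_pos (fun k _ => mul_pos (hA.1 i0 k) (hw k)) ⟨i0, Finset.mem_univ _⟩
  have hlam : 0 < lam := pos_of_mul_pos_left hpos (hw i0).le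
  have hww : ∀ i j, A i j * w j = w i := by
    intro i j
    apply mul_left_cancel₀ hlam.ne'
    rw [hprop i j]
    ring
  refine ⟨?_, fun i j => ?_⟩
  · have h := hS i0
    simp only [hww, Finset.sum_const, Finset.card_univ, Fintype.card_fin, nsmul_eq_mul] at h
    exact (mul_right_cancel₀ (hw i0).ne' h).symm
  · rw [div_eq_iff (hw j).ne', hww]
end

section
/- The Logarithmic Least Squares Method satisfies invariance to α-transformation on a triad: if A and Â are n×n pairwise comparison matrices such that Â is obtained from A by an α-transformation on some triad (i,j,k) with some α > 0, then the LLSM weight vectors of A and Â are equal. -/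
open Finset

/-- Scaling one entry up and another down by the same factor keeps the product. -/
theorem prod_two_change {n : ℕ} (f g : Fin n → ℝ) (p q : Fin n) (a : ℝ) (ha : a ≠ 0)
    (hpq : p ≠ q) (hp : g p = a * f p) (hq : g q = f q / a)
    (h : ∀ m, m ≠ p → m ≠ q → g m = f m) : ∏ m, f m = ∏ m, g m := by
  have hq' : q ∈ (Finset.univ : Finset (Fin n)).erase p := by simp [hpq.symm]
  rw [← Finset.mul_prod_erase _ f (Finset.mem_univ p), ← Finset.mul_prod_erase _ f hq',
    ← Finset.mul_prod_erase _ g (Finset.mem_univ p), ← Finset.mul_prod_erase _ g hq', hp, hq]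
  have : ∏ m ∈ (Finset.univ.erase p).erase q, g m
      = ∏ m ∈ (Finset.univ.erase p).erase q, f m := by
    apply Finset.prod_congr rfl
    intro m hm
    simp only [Finset.mem_erase] at hm
    exact h m hm.2.1 hm.1
  rw [this]
  field_simp

theorem llsm_invariant_triadTransform {n : ℕ}
    (A Ahat : Matrix (Fin n) (Fin n) ℝ) (i j k : Fin n) (α : ℝ)
    (hA : IsPCM A) (h : TriadTransform A Ahat i j k α) :
    llsm A = llsm Ahat := by
  obtain ⟨hij, hjk, hik, hα, h1, h2, h3, h4, h5, h6, h7⟩ := h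
  have key : ∀ l, ∏ m, A l m = ∏ m, Ahat l m := by
    intro l
    by_cases hi : l = i
    · subst hi
      refine prod_two_change _ _ j k α hα.ne' hjk h1 h6 ?_
      intro m _ _
      apply h7 <;> grind
    by_cases hj : l = j
    · subst hj
      refine prod_two_change _ _ k i α hα.ne' hik.symm h3 h2 ?_
      intro m _ _
      apply h7 <;> grind
    by_cases hk : l = k
    · subst hk
      refine prod_two_change _ _ i j α hα.ne' hij h5 h4 ?_
      intro m _ _
      apply h7 <;> grind
    apply Finset.prod_congr rfl
    intro m _
    symm
    apply h7 <;> grind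
  funext l
  simp only [llsm, key]
end

section
/- Let A be the 4×4 pairwise comparison matrix with rows (1,1,1,8), (1,1,1,1), (1,1,1,1), (1/8,1,1,1), and let Â be the 4×4 pairwise comparison matrix with rows (1,2,1,4), (1/2,1,1,2), (1,1,1,1), (1/4,1/2,1,1); note that Â is obtained from A by the α-transformation on the triad (1,2,4) with α = 2. Then for all real numbers λ, μ and all vectors w, ŵ ∈ ℝ^4 with positive entries and Σ w_i = Σ ŵ_i = 1 such that A·w = λ·w and Â·ŵ = μ·ŵ, we have w ≠ ŵ. (This shows the Eigenvector Method violates invariance to α-transformation on a triad.) -/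
open Finset

theorem em_violates_IT
    (A Ahat : Matrix (Fin 4) (Fin 4) ℝ)
    (hA : A = !![1, 1, 1, 8; 1, 1, 1, 1; 1, 1, 1, 1; 1/8, 1, 1, 1])
    (hAhat : Ahat = !![1, 2, 1, 4; 1/2, 1, 1, 2; 1, 1, 1, 1; 1/4, 1/2, 1, 1])
    (lam mu : ℝ) (w what : Fin 4 → ℝ)
    (hw : ∀ i, 0 < w i) (hwhat : ∀ i, 0 < what i)
    (hws : ∑ i, w i = 1) (hwhats : ∑ i, what i = 1)
    (heig : A.mulVec w = lam • w) (heighat : Ahat.mulVec what = mu • what) :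
    w ≠ what := by
  intro h
  subst h
  subst hA
  subst hAhat
  have a0 := congrFun heig 0
  have a1 := congrFun heig 1
  have a2 := congrFun heig 2
  have a3 := congrFun heig 3
  have b0 := congrFun heighat 0
  have b1 := congrFun heighat 1
  have b2 := congrFun heighat 2
  have b3 := congrFun heighat 3
  simp [Matrix.mulVec, dotProduct, Fin.sum_univ_four] at a0 a1 a2 a3 b0 b1 b2 b3
  have hlm : lam = mu := by
    have h2 := hw 2
    apply mul_right_cancel₀ h2.ne'
    linarith
  subst hlm
  have h0 := hw 0
  have h3 := hw 3
  linarith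
end

section
/- Let A be an n×n pairwise comparison matrix (n ≥ 3) and let P_i = (∏_{j=1}^n a_{i,j})^{1/n} denote the geometric mean of the i-th row. Let B be the matrix with entries b_{i,j} = P_i / P_j. Then B is a consistent pairwise comparison matrix, and B can be obtained from A by a finite sequence of α-transformations on triads; that is, the pair (A, B) lies in the reflexive–transitive closure of the relation 'is obtained by an α-transformation on some triad with some α > 0'. -/
open Finset

/-- Elementary multiplicative modification of the entries `(a,b)` and `(b,a)`. -/
noncomputable def elemC {n : ℕ} (α : ℝ) (a b l m : Fin n) : ℝ :=
  (if l = a then (if m = b then α else 1) else 1) *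
    (if l = b then (if m = a then α⁻¹ else 1) else 1)

theorem elemC_prod {n : ℕ} (α : ℝ) (a b l : Fin n) :
    ∏ m, elemC α a b l m = (if l = a then α else 1) * (if l = b then α⁻¹ else 1) := by
  unfold elemC
  rw [Finset.prod_mul_distrib]
  congr 1 <;> split_ifs <;> simp

theorem elemC_pos {n : ℕ} {α : ℝ} (h : 0 < α) (a b l m : Fin n) : 0 < elemC α a b l m := by
  unfold elemC
  split_ifs <;> positivity

theorem elemC_recip {n : ℕ} {α : ℝ} (h : 0 < α) (a b l m : Fin n) :
    elemC α a b m l = 1 / elemC α a b l m := by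
  have := h.ne'
  unfold elemC
  split_ifs <;> simp_all

/-- The transformed matrix. -/
noncomputable def triT {n : ℕ} (X : Matrix (Fin n) (Fin n) ℝ) (i j k : Fin n) (α : ℝ) :
    Matrix (Fin n) (Fin n) ℝ :=
  fun l m => X l m * (elemC α i j l m * elemC α j k l m * elemC α k i l m)

theorem triT_pcm {n : ℕ} {X : Matrix (Fin n) (Fin n) ℝ} (hX : IsPCM X) (i j k : Fin n) {α : ℝ}
    (h : 0 < α) : IsPCM (triT X i j k α) := by
  refine ⟨fun l m => ?_, fun l m => ?_⟩
  · exact mul_pos (hX.1 l m) (mul_pos (mul_pos (elemC_pos h _ _ _ _) (elemC_pos h _ _ _ _))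
      (elemC_pos h _ _ _ _))
  · unfold triT
    rw [hX.2 l m, elemC_recip h i j l m, elemC_recip h j k l m, elemC_recip h k i l m]
    simp only [one_div, mul_inv]

theorem triT_prod {n : ℕ} (X : Matrix (Fin n) (Fin n) ℝ) (i j k : Fin n) {α : ℝ}
    (h : 0 < α) (l : Fin n) : ∏ m, triT X i j k α l m = ∏ m, X l m := by
  have := h.ne'
  unfold triT
  simp only [Finset.prod_mul_distrib, elemC_prod]
  split_ifs <;> simp_all

theorem triT_transform {n : ℕ} (X : Matrix (Fin n) (Fin n) ℝ) {i j k : Fin n} {α : ℝ}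
    (h : 0 < α) (hij : i ≠ j) (hjk : j ≠ k) (hik : i ≠ k) :
    TriadTransform X (triT X i j k α) i j k α := by
  refine ⟨hij, hjk, hik, h, ?_, ?_, ?_, ?_, ?_, ?_, ?_⟩
  iterate 6
    · simp [triT, elemC, hij, hjk, hik, hij.symm, hjk.symm, hik.symm, div_eq_mul_inv, mul_comm]
  · intro l m h1 h2 h3 h4 h5 h6
    simp only [ne_eq, Prod.mk.injEq] at h1 h2 h3 h4 h5 h6
    unfold triT elemC
    split_ifs <;> simp_all

theorem pcm_diag {n : ℕ} {X : Matrix (Fin n) (Fin n) ℝ} (hX : IsPCM X) (i : Fin n) :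
    X i i = 1 := by
  have h1 := hX.1 i i
  have h2 := hX.2 i i
  rw [eq_div_iff h1.ne'] at h2
  nlinarith

theorem pcm_eq_of_off {n : ℕ} {X B : Matrix (Fin n) (Fin n) ℝ} (hX : IsPCM X) (hB : IsPCM B)
    (z : Fin n) (hp : ∀ l, ∏ m, X l m = ∏ m, B l m)
    (h : ∀ l m, l ≠ z → m ≠ z → X l m = B l m) : X = B := by
  have key : ∀ l, l ≠ z → X l z = B l z := by
    intro l hl
    have h1 := hp l
    rw [← Finset.mul_prod_erase Finset.univ _ (Finset.mem_univ z),
      ← Finset.mul_prod_erase Finset.univ (fun m => B l m) (Finset.mem_univ z)] at h1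
    have h2 : ∏ m ∈ Finset.univ.erase z, X l m = ∏ m ∈ Finset.univ.erase z, B l m :=
      Finset.prod_congr rfl fun m hm => h l m hl (Finset.ne_of_mem_erase hm)
    rw [h2] at h1
    exact mul_right_cancel₀ (Finset.prod_pos fun m _ => hB.1 l m).ne' h1
  ext l m
  by_cases hl : l = z
  · by_cases hm : m = z
    · rw [hl, hm, pcm_diag hX, pcm_diag hB]
    · rw [hl, hX.2 m z, hB.2 m z, key m hm]
  · by_cases hm : m = z
    · rw [hm, key l hl]
    · exact h l m hl hm

theorem pcm_reach {n : ℕ} {B : Matrix (Fin n) (Fin n) ℝ} (hB : IsPCM B) (z : Fin n)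
    (S : Finset (Fin n × Fin n)) : ∀ X : Matrix (Fin n) (Fin n) ℝ, IsPCM X →
    (∀ l, ∏ m, X l m = ∏ m, B l m) →
    (∀ l m, l ≠ z → m ≠ z → (l, m) ∉ S → X l m = B l m) →
    Relation.ReflTransGen
      (fun X Y : Matrix (Fin n) (Fin n) ℝ =>
        ∃ (i j k : Fin n) (α : ℝ), TriadTransform X Y i j k α) X B := by
  induction S using Finset.induction_on with
  | empty =>
    intro X hX hp h
    rw [pcm_eq_of_off hX hB z hp fun l m hl hm => h l m hl hm (Finset.notMem_empty _)]
  | insert p S _ ih =>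
    intro X hX hp h
    obtain ⟨a, b⟩ := p
    by_cases hg : a ≠ z ∧ b ≠ z ∧ a ≠ b
    · obtain ⟨ha, hb, hab⟩ := hg
      have hα : 0 < B a b / X a b := div_pos (hB.1 a b) (hX.1 a b)
      have ht := triT_transform X hα hab hb ha
      have hY := triT_pcm hX a b z hα
      have hYab : triT X a b z (B a b / X a b) a b = B a b := by
        rw [ht.2.2.2.2.1]
        exact div_mul_cancel₀ _ (hX.1 a b).ne'
      refine Relation.ReflTransGen.head ⟨a, b, z, _, ht⟩ (ih _ hY ?_ ?_)
      · intro l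
        rw [triT_prod X a b z hα l, hp l]
      · intro l m hl hm hS
        by_cases h1 : (l, m) = (a, b)
        · obtain ⟨rfl, rfl⟩ := Prod.mk.inj h1
          exact hYab
        by_cases h2 : (l, m) = (b, a)
        · obtain ⟨rfl, rfl⟩ := Prod.mk.inj h2
          rw [hY.2 m l, hB.2 m l, hYab]
        rw [ht.2.2.2.2.2.2.2.2.2.2 l m h1 h2 (by simp [hm]) (by simp [hl]) (by simp [hl])
          (by simp [hm])]
        exact h l m hl hm (by simp only [Finset.mem_insert, not_or]; exact ⟨h1, hS⟩)
    · refine ih X hX hp fun l m hl hm hS => ?_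
      by_cases h1 : (l, m) = (a, b)
      · obtain ⟨rfl, rfl⟩ := Prod.mk.inj h1
        have : l = m := by tauto
        rw [this, pcm_diag hX, pcm_diag hB]
      · exact h l m hl hm (by simp only [Finset.mem_insert, not_or]; exact ⟨h1, hS⟩)

theorem pcm_prod_all {n : ℕ} {X : Matrix (Fin n) (Fin n) ℝ} (hX : IsPCM X) :
    ∏ i, ∏ j, X i j = 1 := by
  have hpos : 0 < ∏ i, ∏ j, X i j := Finset.prod_pos fun i _ => Finset.prod_pos fun j _ => hX.1 i j
  have h : ∏ i, ∏ j, X i j = (∏ i, ∏ j, X i j)⁻¹ := by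
    refine Finset.prod_comm.trans ?_
    simp only [← Finset.prod_inv_distrib]
    exact Finset.prod_congr rfl fun i _ => Finset.prod_congr rfl fun j _ => by
      rw [hX.2 i j, one_div]
  rw [← one_div, eq_div_iff hpos.ne'] at h
  nlinarith

theorem pcm_reachable_consistent {n : ℕ} (hn : 3 ≤ n)
    (A : Matrix (Fin n) (Fin n) ℝ) (hA : IsPCM A)
    (B : Matrix (Fin n) (Fin n) ℝ)
    (hB : ∀ i j, B i j =
      (∏ m, A i m) ^ ((1 : ℝ) / n) / (∏ m, A j m) ^ ((1 : ℝ) / n)) :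
    IsPCM B ∧ IsConsistent B ∧
    Relation.ReflTransGen
      (fun X Y : Matrix (Fin n) (Fin n) ℝ =>
        ∃ (i j k : Fin n) (α : ℝ), TriadTransform X Y i j k α) A B := by
  have hQ : ∀ i, 0 < ∏ m, A i m := fun i => Finset.prod_pos fun j _ => hA.1 i j
  have hP : ∀ i, 0 < (∏ m, A i m) ^ ((1 : ℝ) / n) := fun i => Real.rpow_pos_of_pos (hQ i) _
  have hBp : IsPCM B := by
    refine ⟨fun i j => ?_, fun i j => ?_⟩
    · rw [hB]
      exact div_pos (hP i) (hP j)
    · rw [hB, hB, one_div_div]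
  refine ⟨hBp, ?_, ?_⟩
  · intro i j k
    rw [hB, hB, hB, div_mul_div_cancel₀ (hP j).ne']
  · refine pcm_reach hBp ⟨0, by omega⟩ Finset.univ A hA ?_ (fun l m _ _ h => absurd (Finset.mem_univ _) h)
    intro l
    simp only [hB]
    rw [Finset.prod_div_distrib, Real.finsetProd_rpow _ _ (fun i _ => (hQ i).le), pcm_prod_all hA,
      Real.one_rpow, div_one, Finset.prod_const, Finset.card_univ, Fintype.card_fin, one_div,
      Real.rpow_inv_natCast_pow (hQ l).le (by omega)]
end

section
/- Characterization of the Logarithmic Least Squares Method (uniqueness): let n ≥ 3 and let f be any weighting method on n×n pairwise comparison matrices satisfying (CO) for every consistent pairwise comparison matrix A, f_i(A)/f_j(A) = a_{i,j} for all i, j, and (IT) f(A) = f(Â) whenever Â is obtained from A by an α-transformation on some triad with some α > 0. Then for every n×n pairwise comparison matrix A, f(A) equals the LLSM weight vector of A. -/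
open Finset

/-- Elementary matrix as a function. -/
def eMat {n : ℕ} (i j l m : Fin n) : ℝ := (if l = i then 1 else 0) * (if m = j then 1 else 0)

/-- Antisymmetric triad cycle matrix. -/
def cMat {n : ℕ} (i j k l m : Fin n) : ℝ :=
  eMat i j l m - eMat j i l m + eMat j k l m - eMat k j l m + eMat k i l m - eMat i k l m

/-- Entrywise exponential. -/
noncomputable def expMat {n : ℕ} (L : Fin n → Fin n → ℝ) : Matrix (Fin n) (Fin n) ℝ :=
  fun i j => Real.exp (L i j)

theorem expMat_pcm {n : ℕ} (L : Fin n → Fin n → ℝ) (h : ∀ i j, L j i = - L i j) :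
    IsPCM (expMat L) := by
  refine ⟨fun i j => Real.exp_pos _, fun i j => ?_⟩
  simp only [expMat]
  rw [h i j, Real.exp_neg, one_div]

theorem cMat_anti {n : ℕ} (i j k l m : Fin n) : cMat i j k m l = - cMat i j k l m := by
  simp only [cMat, eMat]; ring

theorem triad_expMat {n : ℕ} (L : Fin n → Fin n → ℝ) (i j k : Fin n) (hij : i ≠ j)
    (hjk : j ≠ k) (hik : i ≠ k) (t : ℝ) :
    TriadTransform (expMat L) (expMat (fun l m => L l m + t * cMat i j k l m)) i j k
      (Real.exp t) := by
  have h1 := hij.symm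
  have h2 := hjk.symm
  have h3 := hik.symm
  refine ⟨hij, hjk, hik, Real.exp_pos _, ?_, ?_, ?_, ?_, ?_, ?_, ?_⟩
  iterate 6
    simp only [expMat, ← Real.exp_add, ← Real.exp_sub]
    congr 1
    simp [cMat, eMat, hij, hjk, hik, h1, h2, h3]
    try ring
  intro l m a b c d e g
  simp only [expMat]
  congr 1
  have key : cMat i j k l m = 0 := by
    have z : ∀ p q : Fin n, (l, m) ≠ (p, q) → eMat p q l m = 0 := by
      intro p q hpq
      simp only [eMat]
      by_cases h : l = p
      · have : m ≠ q := fun h' => hpq (by rw [h, h'])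
        simp [this]
      · simp [h]
    simp [cMat, z _ _ a, z _ _ b, z _ _ c, z _ _ d, z _ _ e, z _ _ g]
  rw [key]; ring

theorem step_eq {n : ℕ} (f : Matrix (Fin n) (Fin n) ℝ → (Fin n → ℝ))
    (hIT : ∀ A Ahat, IsPCM A →
      (∃ (i j k : Fin n) (α : ℝ), TriadTransform A Ahat i j k α) → f A = f Ahat)
    (L : Fin n → Fin n → ℝ) (h : ∀ i j, L j i = - L i j) (i j k : Fin n) (t : ℝ) :
    f (expMat L) = f (expMat (fun l m => L l m + t * cMat i j k l m)) := by
  by_cases hd : i ≠ j ∧ j ≠ k ∧ i ≠ k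
  · exact hIT _ _ (expMat_pcm L h) ⟨i, j, k, _, triad_expMat L i j k hd.1 hd.2.1 hd.2.2 t⟩
  · have : ∀ l m, cMat i j k l m = 0 := by
      intro l m
      by_cases h1 : i = j
      · subst h1; simp only [cMat]; ring
      by_cases h2 : j = k
      · subst h2; simp only [cMat]; ring
      by_cases h3 : i = k
      · subst h3; simp only [cMat]; ring
      exact absurd ⟨h1, h2, h3⟩ hd
    simp [this]

theorem sum_eq {n : ℕ} (f : Matrix (Fin n) (Fin n) ℝ → (Fin n → ℝ))
    (hIT : ∀ A Ahat, IsPCM A →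
      (∃ (i j k : Fin n) (α : ℝ), TriadTransform A Ahat i j k α) → f A = f Ahat)
    (L : Fin n → Fin n → ℝ) (h : ∀ i j, L j i = - L i j) (i : Fin n)
    (c : Fin n × Fin n → ℝ) (s : Finset (Fin n × Fin n)) :
    f (expMat L) = f (expMat (fun l m => L l m + ∑ p ∈ s, c p * cMat i p.1 p.2 l m)) := by
  induction s using Finset.induction_on with
  | empty => simp
  | insert a s ha ih =>
    rw [ih, step_eq f hIT _ _ i a.1 a.2 (c a)]
    · congr 2
      funext l m
      rw [Finset.sum_insert ha]; ring
    · intro l m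
      rw [h l m, neg_add, ← Finset.sum_neg_distrib]
      congr 1
      apply Finset.sum_congr rfl
      intro p _
      rw [cMat_anti]; ring

theorem decomp {n : ℕ} (B : Fin n → Fin n → ℝ) (h : ∀ i j, B j i = - B i j)
    (hr : ∀ i, ∑ j, B i j = 0) (i l m : Fin n) :
    ∑ p : Fin n × Fin n, (1 / 2 * B p.1 p.2) * cMat i p.1 p.2 l m = B l m := by
  have hc : ∀ j, ∑ i, B i j = 0 := by
    intro j
    rw [Finset.sum_congr rfl (fun i _ => h j i), Finset.sum_neg_distrib, hr j, neg_zero]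
  rw [Fintype.sum_prod_type]
  have e1 : ∑ j, ∑ k, B j k * eMat i j l m = 0 := by simp [← Finset.sum_mul, hr]
  have e2 : ∑ j, ∑ k, B j k * eMat j i l m = 0 := by simp [← Finset.sum_mul, hr]
  have e3 : ∑ j, ∑ k, B j k * eMat j k l m = B l m := by simp [eMat]
  have e4 : ∑ j, ∑ k, B j k * eMat k j l m = B m l := by
    rw [Finset.sum_comm]; simp [eMat]
  have e5 : ∑ j, ∑ k, B j k * eMat k i l m = 0 := by
    rw [Finset.sum_comm]; simp [← Finset.sum_mul, hc]
  have e6 : ∑ j, ∑ k, B j k * eMat i k l m = 0 := by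
    rw [Finset.sum_comm]; simp [← Finset.sum_mul, hc]
  have : ∑ j, ∑ k, (1 / 2 * B j k) * cMat i j k l m = 1 / 2 *
      (∑ j, ∑ k, B j k * eMat i j l m - ∑ j, ∑ k, B j k * eMat j i l m
      + ∑ j, ∑ k, B j k * eMat j k l m - ∑ j, ∑ k, B j k * eMat k j l m
      + ∑ j, ∑ k, B j k * eMat k i l m - ∑ j, ∑ k, B j k * eMat i k l m) := by
    simp only [← Finset.sum_sub_distrib, ← Finset.sum_add_distrib, Finset.mul_sum]
    refine Finset.sum_congr rfl fun j _ => Finset.sum_congr rfl fun k _ => ?_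
    simp only [cMat]; ring
  rw [this, e1, e2, e3, e4, e5, e6, h l m]; ring

theorem llsm_characterization {n : ℕ} (hn : 3 ≤ n)
    (f : Matrix (Fin n) (Fin n) ℝ → (Fin n → ℝ))
    (hweight : ∀ A, IsPCM A → (∀ i, 0 < f A i) ∧ ∑ i, f A i = 1)
    (hCO : ∀ A, IsPCM A → IsConsistent A → ∀ i j, f A i / f A j = A i j)
    (hIT : ∀ A Ahat, IsPCM A →
      (∃ (i j k : Fin n) (α : ℝ), TriadTransform A Ahat i j k α) → f A = f Ahat) :
    ∀ A, IsPCM A → f A = llsm A := by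
  intro A hA
  have hn0 : (n : ℝ) ≠ 0 := by
    have : n ≠ 0 := by omega
    exact_mod_cast this
  let i0 : Fin n := ⟨0, by omega⟩
  obtain ⟨L, hLdef⟩ : ∃ L : Fin n → Fin n → ℝ, L = fun i j => Real.log (A i j) := ⟨_, rfl⟩
  have hL : ∀ i j, L j i = - L i j := by
    intro i j
    simp only [hLdef]
    rw [hA.2 i j, one_div, Real.log_inv]
  have hAL : A = expMat L := by
    ext i j
    simp only [expMat, hLdef]
    rw [Real.exp_log (hA.1 i j)]
  obtain ⟨r, hrdef⟩ : ∃ r : Fin n → ℝ, r = fun i => (∑ j, L i j) * (1 / n) := ⟨_, rfl⟩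
  have hr0 : ∑ i, r i = 0 := by
    have h1 : ∑ i, ∑ j, L i j = - ∑ i, ∑ j, L i j := by
      conv_lhs => rw [Finset.sum_comm]
      simp_rw [← Finset.sum_neg_distrib]
      exact Finset.sum_congr rfl fun i _ => Finset.sum_congr rfl fun j _ => hL i j
    have h2 : ∑ i, ∑ j, L i j = 0 := by linarith
    simp only [hrdef]
    rw [← Finset.sum_mul, h2, zero_mul]
  have hM : ∀ i j, (fun i j => r i - r j) j i = - (fun i j => r i - r j) i j := by
    intro i j; simp
  have hf : f A = f (expMat (fun i j => r i - r j)) := by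
    rw [hAL, sum_eq f hIT L hL i0 (fun p => 1 / 2 * ((r p.1 - r p.2) - L p.1 p.2)) Finset.univ]
    congr 2
    funext l m
    rw [decomp (fun i j => (r i - r j) - L i j)]
    · ring
    · intro i j
      simp only [hL i j]; ring
    · intro i
      simp only [Finset.sum_sub_distrib, hr0]
      simp [hrdef]
      field_simp
      ring
  have hP := expMat_pcm _ hM
  obtain ⟨hpos, hsum⟩ := hweight _ hP
  have hco := hCO _ hP (by
    intro i j k
    simp only [expMat, ← Real.exp_add]
    congr 1; ring)
  rw [← hf] at hpos hsum hco
  have hl : ∀ i, (∏ j, A i j) ^ ((1 : ℝ) / n) = Real.exp (r i) := by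
    intro i
    have : ∏ j, A i j = Real.exp (∑ j, L i j) := by
      rw [Real.exp_sum, hAL]; rfl
    rw [this, ← Real.exp_mul, hrdef]
  funext i
  simp only [llsm, hl]
  have hk : ∀ k, Real.exp (r k) = f A k * (Real.exp (r i) / f A i) := by
    intro k
    have h := hco k i
    have := (hpos i).ne'
    simp only [expMat] at h
    rw [Real.exp_sub] at h
    have := (Real.exp_pos (r i)).ne'
    field_simp at h ⊢
    linarith
  have hS : ∑ k, Real.exp (r k) = Real.exp (r i) / f A i := by
    rw [Finset.sum_congr rfl (fun k _ => hk k), ← Finset.sum_mul, hsum, one_mul]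
  rw [hS]
  have := (hpos i).ne'
  have := (Real.exp_pos (r i)).ne'
  field_simp
end

section
/- For every 3×3 pairwise comparison matrix A, the LLSM weight vector w of A is an eigenvector of A with positive eigenvalue: there exists λ > 0 such that A·w = λ·w. (Hence for n = 3 the Eigenvector Method and the Logarithmic Least Squares Method yield the same weight vector.) -/
open Finset

theorem cube_root_aux (t : ℝ) (ht : 0 < t) : ∃ x : ℝ, 0 < x ∧ t = x ^ 3 := by
  refine ⟨t ^ ((1 : ℝ) / (3 : ℕ)), Real.rpow_pos_of_pos ht _, ?_⟩
  rw [one_div, Real.rpow_inv_natCast_pow ht.le (by norm_num)]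

theorem cube_rpow_aux (u v : ℝ) (hv : 0 ≤ v) (h : u = v ^ 3) :
    u ^ ((1 : ℝ) / (3 : ℕ)) = v := by
  rw [h, one_div, Real.pow_rpow_inv_natCast hv (by norm_num)]

theorem llsm_eigenvector_three {A : Matrix (Fin 3) (Fin 3) ℝ} (hA : IsPCM A) :
    ∃ lam : ℝ, 0 < lam ∧ A.mulVec (llsm A) = lam • llsm A := by
  obtain ⟨hpos, hrec⟩ := hA
  obtain ⟨x, hx, hax⟩ := cube_root_aux _ (hpos 0 1)
  obtain ⟨y, hy, hay⟩ := cube_root_aux _ (hpos 0 2)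
  obtain ⟨z, hz, haz⟩ := cube_root_aux _ (hpos 1 2)
  have hdiag : ∀ i, A i i = 1 := by
    intro i
    have h1 := hrec i i
    have h2 := hpos i i
    rw [eq_div_iff h2.ne'] at h1
    nlinarith
  have h10 : A 1 0 = 1 / x ^ 3 := by rw [hrec 0 1, hax]
  have h20 : A 2 0 = 1 / y ^ 3 := by rw [hrec 0 2, hay]
  have h21 : A 2 1 = 1 / z ^ 3 := by rw [hrec 1 2, haz]
  have e0 : (∏ j, A 0 j) ^ ((1 : ℝ) / (3 : ℕ)) = x * y := by
    apply cube_rpow_aux _ _ (by positivity)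
    rw [Fin.prod_univ_three, hdiag, hax, hay]
    ring
  have e1 : (∏ j, A 1 j) ^ ((1 : ℝ) / (3 : ℕ)) = z / x := by
    apply cube_rpow_aux _ _ (by positivity)
    rw [Fin.prod_univ_three, hdiag, h10, haz]
    field_simp
  have e2 : (∏ j, A 2 j) ^ ((1 : ℝ) / (3 : ℕ)) = 1 / (y * z) := by
    apply cube_rpow_aux _ _ (by positivity)
    rw [Fin.prod_univ_three, hdiag, h20, h21]
    field_simp
  obtain ⟨S, hS⟩ : ∃ S, S = ∑ k, (∏ j, A k j) ^ ((1 : ℝ) / (3 : ℕ)) := ⟨_, rfl⟩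
  have hSpos : 0 < S := by
    rw [hS, Fin.sum_univ_three, e0, e1, e2]
    positivity
  have l0 : llsm A 0 = x * y / S := by
    unfold llsm
    rw [← hS, e0]
  have l1 : llsm A 1 = z / x / S := by
    unfold llsm
    rw [← hS, e1]
  have l2 : llsm A 2 = 1 / (y * z) / S := by
    unfold llsm
    rw [← hS, e2]
  refine ⟨1 + x * z / y + y / (x * z), by positivity, ?_⟩
  funext i
  rw [Matrix.mulVec, dotProduct, Fin.sum_univ_three, Pi.smul_apply, smul_eq_mul, l0, l1, l2]
  fin_cases i
  · change A 0 0 * _ + A 0 1 * _ + A 0 2 * _ = _ * llsm A 0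
    rw [hdiag, hax, hay, l0]
    field_simp
    try ring
  · change A 1 0 * _ + A 1 1 * _ + A 1 2 * _ = _ * llsm A 1
    rw [hdiag, h10, haz, l1]
    field_simp
    try ring
  · change A 2 0 * _ + A 2 1 * _ + A 2 2 * _ = _ * llsm A 2
    rw [hdiag, h20, h21, l2]
    field_simp
    try ring
end

section
/- For every n ≥ 3 there exists a weighting method on n×n pairwise comparison matrices that satisfies correctness (CO) but violates invariance to α-transformation on a triad (IT). Together with the existence of a method satisfying IT but not CO, this shows that the axioms CO and IT are logically independent. -/
open Finset

theorem exists_CO_not_IT {n : ℕ} (hn : 3 ≤ n) :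
    ∃ f : Matrix (Fin n) (Fin n) ℝ → (Fin n → ℝ),
      (∀ A, IsPCM A → (∀ i, 0 < f A i) ∧ ∑ i, f A i = 1) ∧
      (∀ A, IsPCM A → IsConsistent A → ∀ i j, f A i / f A j = A i j) ∧
      ¬ (∀ A Ahat : Matrix (Fin n) (Fin n) ℝ, IsPCM A →
        (∃ (i j k : Fin n) (α : ℝ), TriadTransform A Ahat i j k α) →
        f A = f Ahat) := by
  let a : Fin n := ⟨0, by omega⟩
  let b : Fin n := ⟨1, by omega⟩
  let c : Fin n := ⟨2, by omega⟩
  have hab : a ≠ b := by simp [a, b]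
  have hbc : b ≠ c := by simp [b, c]
  have hac : a ≠ c := by simp [a, c]
  have hS : ∀ A : Matrix (Fin n) (Fin n) ℝ, IsPCM A → 0 < ∑ k, A k a :=
    fun A hA => Finset.sum_pos (fun k _ => hA.1 k a) ⟨a, Finset.mem_univ a⟩
  refine ⟨fun A i => A i a / ∑ k, A k a, ?_, ?_, ?_⟩
  · intro A hA
    refine ⟨fun i => div_pos (hA.1 i a) (hS A hA), ?_⟩
    rw [← Finset.sum_div]
    exact div_self (hS A hA).ne'
  · intro A hA hC i j
    have h1 := hS A hA
    have h2 := hA.1 j a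
    have h3 := hC i a j
    rw [hA.2 j a] at h3
    change A i a / (∑ k, A k a) / (A j a / ∑ k, A k a) = A i j
    rw [h3, div_div_div_cancel_right₀ h1.ne', mul_one_div]
  · intro h
    let B : Matrix (Fin n) (Fin n) ℝ := fun l m =>
      if (l, m) = (a, b) ∨ (l, m) = (b, c) ∨ (l, m) = (c, a) then 2
      else if (l, m) = (b, a) ∨ (l, m) = (c, b) ∨ (l, m) = (a, c) then 1 / 2 else 1
    have hBpos : ∀ l m, 0 < B l m := by
      intro l m
      simp only [B]
      split_ifs <;> norm_num
    have hBaa : B a a = 1 := by simp [B, hab, hbc, hac, hab.symm, hbc.symm, hac.symm]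
    have hBba : B b a = 1 / 2 := by simp [B, hab, hbc, hac, hab.symm, hbc.symm, hac.symm]
    have key := h (fun _ _ => 1) B ⟨fun _ _ => one_pos, fun _ _ => by norm_num⟩
      ⟨a, b, c, 2, hab, hbc, hac, by norm_num, by simp [B], by simp [B, hab, hbc, hac, hab.symm, hbc.symm, hac.symm],
        by simp [B], by simp [B, hab, hbc, hac, hab.symm, hbc.symm, hac.symm], by simp [B],
        by simp [B, hab, hbc, hac, hab.symm, hbc.symm, hac.symm], by
          intro l m h1 h2 h3 h4 h5 h6
          simp only [B]
          rw [if_neg (by tauto), if_neg (by tauto)]⟩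
    have hT : 0 < ∑ k, B k a := Finset.sum_pos (fun k _ => hBpos k a) ⟨a, Finset.mem_univ a⟩
    have ka := congrFun key a
    have kb := congrFun key b
    have e : B a a / (∑ k, B k a) = B b a / ∑ k, B k a := ka.symm.trans kb
    rw [div_left_inj' hT.ne', hBaa, hBba] at e
    norm_num at e
end
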